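/- Let A be a pushdown timed automaton. For any states s₀ and s₁ of A, any two initial clock valuations v₀¹ and v₀², any two clock valuations v₁ and v₂, and any two stack words w₀ and w₁: if (v₀¹,v₁) ≈ (v₀²,v₂), then (s₀,v₀¹,w₀) →*_A (s₁,v₁,w₁) iff (s₀,v₀²,w₀) →*_A (s₁,v₂,w₁). -/

import Mathlib

open scoped BigOperators

namespace PTApaper

/-! ## Clock valuations -/

/-- A (raw) clock valuation on clocks `x_0, …, x_k`. -/
abbrev Val (k : ℕ) := Fin (k+1) → ℝ

/-- A discrete clock valuation. -/
abbrev DVal (k : ℕ) := Fin (k+1) → ℕ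

/-- A clock valuation takes nonnegative values. -/
def IsVal {k : ℕ} (v : Val k) : Prop := ∀ i, 0 ≤ v i

/-- A valuation is initial if the auxiliary clock `x_0` has value 0. -/
def Initial {k : ℕ} (v : Val k) : Prop := v 0 = 0

/-- The integral part `int(v)` of a valuation. -/
noncomputable def intPart {k : ℕ} (v : Val k) : DVal k := fun i => (⌊v i⌋).toNat

/-- The fractional parts of the relative representation `rel(v)`:
`fract(rel(v))(0) = fract (1 - fract (v 0))` and
`fract(rel(v))(i) = fract (fract (v i) + fract(rel(v))(0))` for `i ∈ K⁺`. -/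
noncomputable def relFract {k : ℕ} (v : Val k) : Fin (k+1) → ℝ := fun i =>
  if i = 0 then Int.fract (1 - Int.fract (v 0))
  else Int.fract (Int.fract (v i) + Int.fract (1 - Int.fract (v 0)))

/-- Synchronous clock progress `v + δ`. -/
def shift {k : ℕ} (v : Val k) (δ : ℝ) : Val k := fun i => v i + δ

/-- Clock reset `v↓_r`. -/
def resetVal {k : ℕ} (r : Finset (Fin (k+1))) (v : Val k) : Val k :=
  fun i => if i ∈ r then 0 else v i

/-! ## Patterns -/

/-- A raw pattern: a finite sequence of subsets of `K⁰ ∪ K¹`, where the index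
`(i, false)` stands for `i⁰` and `(i, true)` stands for `i¹`. -/
abbrev PatSeq (k : ℕ) := List (Finset (Fin (k+1) × Bool))

/-- The well-formedness conditions making `η = p₀,…,p_n` a pattern:
`0 ≤ n < 2(k+1)`, the `p_m` are nonempty and pairwise disjoint, `0⁰ ∈ p₀`,
and `p₀ ∪ … ∪ p_n = K⁰ ∪ K¹`. -/
def IsPattern {k : ℕ} (η : PatSeq k) : Prop :=
  η.length ≤ 2*(k+1) ∧
  (∀ p ∈ η, p.Nonempty) ∧
  η.Pairwise Disjoint ∧
  ((0 : Fin (k+1)), false) ∈ η.getD 0 ∅ ∧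
  (∀ x : Fin (k+1) × Bool, ∃ p ∈ η, x ∈ p)

/-- `bval v₀ v₁ b` is `v_b`. -/
def bval {k : ℕ} (v₀ v₁ : Val k) : Bool → Val k
  | false => v₀
  | true => v₁

/-- The defining ordering condition for "`(v₀,v₁)` has pattern `η = p₀,…,p_n`":
for all positions `m, m'`, copies `b, b'` and clocks `i, i'` with `i^b ∈ p_m` and
`i'^{b'} ∈ p_{m'}`, `fract(rel(v_b))(i) = fract(rel(v_{b'}))(i')` iff `m = m'`, and
`fract(rel(v_b))(i) < fract(rel(v_{b'}))(i')` iff `m < m'`. -/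
def HasPatternOrd {k : ℕ} (v₀ v₁ : Val k) (η : PatSeq k) : Prop :=
  ∀ m m' : Fin η.length, ∀ b b' : Bool, ∀ i i' : Fin (k+1),
    (i, b) ∈ η.get m → (i', b') ∈ η.get m' →
      ((relFract (bval v₀ v₁ b) i = relFract (bval v₀ v₁ b') i' ↔ m = m') ∧
       (relFract (bval v₀ v₁ b) i < relFract (bval v₀ v₁ b') i' ↔ (m : ℕ) < (m' : ℕ)))

/-- `(v₀,v₁)` has pattern `η` (written `[(v₀,v₁)] = η`). -/
def PatternOf {k : ℕ} (v₀ v₁ : Val k) (η : PatSeq k) : Prop :=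
  IsPattern η ∧ HasPatternOrd v₀ v₁ η

/-- A pattern is initial if it is the pattern of `(v₀,v₀)` for some initial valuation `v₀`. -/
def InitialPattern {k : ℕ} (η : PatSeq k) : Prop :=
  ∃ v₀ : Val k, IsVal v₀ ∧ Initial v₀ ∧ PatternOf v₀ v₀ η

/-- The equivalence `(v₀¹,v₁) ≈ (v₀²,v₂)`: same pattern and same integral parts. -/
def PairEquiv {k : ℕ} (va vb vc vd : Val k) : Prop :=
  (∃ η : PatSeq k, PatternOf va vb η ∧ PatternOf vc vd η) ∧
  intPart va = intPart vc ∧ intPart vb = intPart vd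

/-! ## now-position, Next, next, reset -/

/-- The index of the now-position, i.e. the position containing `0¹`. -/
def nowIdx {k : ℕ} (η : PatSeq k) : ℕ :=
  η.findIdx fun p => decide (((0 : Fin (k+1)), true) ∈ p)

/-- A merge-pattern: the now-position is the singleton `{0¹}`. -/
def IsMergePat {k : ℕ} (η : PatSeq k) : Prop :=
  η.getD (nowIdx η) ∅ = ({((0 : Fin (k+1)), true)} : Finset (Fin (k+1) × Bool))

/-- A split-pattern: a pattern that is not a merge-pattern. -/
def IsSplitPat {k : ℕ} (η : PatSeq k) : Prop := ¬ IsMergePat η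

/-- The next pattern `Next(η)`. -/
def NextPat {k : ℕ} (η : PatSeq k) : PatSeq k :=
  let i := nowIdx η
  if η.getD i ∅ = ({((0 : Fin (k+1)), true)} : Finset (Fin (k+1) × Bool)) then
    -- merge case : `p₀, …, p_{i-1} ∪ {0¹}, p_{i+1}, …, p_n`
    η.take (i-1) ++ [η.getD (i-1) ∅ ∪ {((0 : Fin (k+1)), true)}] ++ η.drop (i+1)
  else if i = 0 then
    -- split case with `i = 0` : `p₀ ∖ {0¹}, p₁, …, p_n, {0¹}`
    (η.getD 0 ∅ \ {((0 : Fin (k+1)), true)}) :: (η.drop 1 ++ [{((0 : Fin (k+1)), true)}])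
  else
    -- split case with `i > 0` : `p₀, …, p_{i-1}, {0¹}, p_i ∖ {0¹}, p_{i+1}, …, p_n`
    η.take i ++ [{((0 : Fin (k+1)), true)}, η.getD i ∅ \ {((0 : Fin (k+1)), true)}]
      ++ η.drop (i+1)

/-- The counter update of `next(η,u)`. -/
def nextD {k : ℕ} (η : PatSeq k) (u : DVal k) : DVal k :=
  let i := nowIdx η
  if η.getD i ∅ = ({((0 : Fin (k+1)), true)} : Finset (Fin (k+1) × Bool)) then
    fun j =>
      if j = 0 then (if i = 1 then u 0 + 1 else u 0)
      else (if (j, true) ∈ η.getD (i-1) ∅ then u j + 1 else u j)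
  else u

/-- `next(η,u)`. -/
def nextPair {k : ℕ} (η : PatSeq k) (u : DVal k) : PatSeq k × DVal k :=
  (NextPat η, nextD η u)

/-- The pattern part of `reset_r(η,u)`: all indices `j¹`, `j ∈ r`, are moved into the
now-position, and entries that become empty are deleted. -/
def ResetPat {k : ℕ} (r : Finset (Fin (k+1))) (η : PatSeq k) : PatSeq k :=
  let r1 : Finset (Fin (k+1) × Bool) := r.image (fun j => (j, true))
  let i := nowIdx η
  (η.mapIdx (fun m p => if m = i then p ∪ r1 else p \ r1)).filter (fun p => decide (p ≠ ∅))

/-- The counter update of `reset_r(η,u)`. -/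
def resetD {k : ℕ} (r : Finset (Fin (k+1))) (u : DVal k) : DVal k :=
  fun j => if j ∈ r then 0 else u j

/-- `reset_r(η,u)`. -/
def resetPair {k : ℕ} (r : Finset (Fin (k+1))) (η : PatSeq k) (u : DVal k) :
    PatSeq k × DVal k :=
  (ResetPat r η, resetD r u)

/-! ## Pattern changes -/

/-- `v` has no pattern change for `δ`. -/
def NoChange {k : ℕ} (v₀ v : Val k) (δ : ℝ) : Prop :=
  ∃ η : PatSeq k, PatternOf v₀ v η ∧
    ∀ δ', 0 ≤ δ' → δ' ≤ δ → PatternOf v₀ (shift v δ') η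

/-- `v` has one pattern change for `δ`. -/
def OneChange {k : ℕ} (v₀ v : Val k) (δ : ℝ) : Prop :=
  ∃ η η' : PatSeq k, PatternOf v₀ v η ∧ PatternOf v₀ (shift v δ) η' ∧
    NextPat η = η' ∧
    ((∀ δ', 0 < δ' → δ' < δ → PatternOf v₀ (shift v δ') η) ∨
     (∀ δ', 0 < δ' → δ' < δ → PatternOf v₀ (shift v δ') η'))

/-- `v` has `n` pattern changes for `δ` (for `n ≥ 1`): `δ = δ₁ + … + δ_n` with each
`δ_j > 0` and `v + δ₁ + … + δ_j` has one pattern change for `δ_{j+1}`. -/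
def NChanges {k : ℕ} (v₀ v : Val k) (n : ℕ) (δ : ℝ) : Prop :=
  ∃ d : ℕ → ℝ, (∀ j < n, 0 < d j) ∧ (∑ j ∈ Finset.range n, d j) = δ ∧
    ∀ j < n, OneChange v₀ (shift v (∑ j' ∈ Finset.range j, d j')) (d j)

/-! ## Clock constraints -/

/-- Comparison operators `<, ≤, =, ≥, >`. -/
inductive CCmp | lt | le | eq | ge | gt

/-- Evaluation of a comparison operator on reals. -/
def CCmp.evalR : CCmp → ℝ → ℝ → Prop
  | .lt, a, b => a < b
  | .le, a, b => a ≤ b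
  | .eq, a, b => a = b
  | .ge, a, b => a ≥ b
  | .gt, a, b => a > b

/-- Clock constraints over the clocks `x_1, …, x_k` (indexed by `Fin k`, clock
`x_{i+1}` for `i : Fin k`): Boolean combinations of `x_i - x_j # d` and `x_i # d`. -/
inductive CC (k : ℕ)
  | diff (i j : Fin k) (op : CCmp) (d : ℕ) : CC k
  | single (i : Fin k) (op : CCmp) (d : ℕ) : CC k
  | not (c : CC k) : CC k
  | and (c₁ c₂ : CC k) : CC k

/-- `v ∈ c` : the valuation `v` satisfies the clock constraint `c`. -/
def CC.sat {k : ℕ} (v : Val k) : CC k → Prop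
  | .diff i j op d => op.evalR (v i.succ - v j.succ) (d : ℝ)
  | .single i op d => op.evalR (v i.succ) (d : ℝ)
  | .not c => ¬ c.sat v
  | .and c₁ c₂ => c₁.sat v ∧ c₂.sat v

/-- The position (in `η`) of an index `x ∈ K⁰ ∪ K¹`. -/
def posOf {k : ℕ} (η : PatSeq k) (x : Fin (k+1) × Bool) : ℕ :=
  η.findIdx fun p => decide (x ∈ p)

/-- The truth value, given by pattern `η`, of the fractional ordering
`fract(x_a) > fract(x_b)`. -/
def fracGtP {k : ℕ} (η : PatSeq k) (a b : Fin (k+1)) : Prop :=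
  let i := posOf η ((0 : Fin (k+1)), true)
  let m₁ := posOf η (a, true)
  let m₂ := posOf η (b, true)
  (m₁ < i ∧ i ≤ m₂) ∨ (m₂ < m₁ ∧ m₁ < i) ∨ (i ≤ m₂ ∧ m₂ < m₁)

/-- The truth value, given by pattern `η`, of `fract(x_a) = fract(x_b)`. -/
def fracEqP {k : ℕ} (η : PatSeq k) (a b : Fin (k+1)) : Prop :=
  posOf η (a, true) = posOf η (b, true)

/-- The truth value, given by pattern `η`, of `fract(x_a) = 0`. -/
def fracZeroP {k : ℕ} (η : PatSeq k) (a : Fin (k+1)) : Prop :=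
  posOf η (a, true) = posOf η ((0 : Fin (k+1)), true)

/-- `u ∈ c^η` : the discrete valuation `u` satisfies the constraint `c^η`, obtained by
rewriting `c` as `I(c)` over integral parts and fractional orderings and substituting the
truth values of the fractional orderings determined by the pattern `η`. -/
def CC.satP {k : ℕ} (η : PatSeq k) (u : DVal k) : CC k → Prop
  | .diff i j op d =>
      let I : ℤ := (u i.succ : ℤ) - (u j.succ : ℤ)
      (match op with
      | .lt => I < d ∨ (I = d ∧ fracGtP η j.succ i.succ)
      | .le => I < d ∨ (I = d ∧ (fracGtP η j.succ i.succ ∨ fracEqP η i.succ j.succ))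
      | .eq => I = d ∧ fracEqP η i.succ j.succ
      | .ge => I > d ∨ (I = d ∧ (fracGtP η i.succ j.succ ∨ fracEqP η i.succ j.succ))
      | .gt => I > d ∨ (I = d ∧ fracGtP η i.succ j.succ))
  | .single i op d =>
      let I : ℤ := (u i.succ : ℤ)
      (match op with
      | .lt => I < d
      | .le => I < d ∨ (I = d ∧ fracZeroP η i.succ)
      | .eq => I = d ∧ fracZeroP η i.succ
      | .ge => I ≥ d
      | .gt => I > d ∨ (I = d ∧ ¬ fracZeroP η i.succ))
  | .not c => ¬ c.satP η u
  | .and c₁ c₂ => c₁.satP η u ∧ c₂.satP η u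

/-! ## Pushdown timed automata -/

/-- A pushdown timed automaton `⟨S, {x₁,…,x_k}, Inv, R, Γ, PD⟩`:
`Inv` assigns an invariant to each state, `R s s' = (Rc s s', Rr s s')` assigns a reset
condition and a set of clock resets (a subset of `K⁺`) to each edge, and
`PD s s' = (PDa s s', PDw s s')` assigns a stack operation to each edge. -/
structure PTA (k : ℕ) (S : Type) (Γ : Type) where
  Inv : S → CC k
  Rc : S → S → CC k
  Rr : S → S → Finset (Fin (k+1))
  hRr : ∀ s s', (0 : Fin (k+1)) ∉ Rr s s'
  PDa : S → S → Γ
  PDw : S → S → List Γ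

/-- A configuration `(s, v, w)` of a PTA. -/
abbrev Config (k : ℕ) (S Γ : Type) := S × Val k × List Γ

/-- The one-step transition relation `→_A` of a PTA. -/
def Step {k : ℕ} {S Γ : Type} (A : PTA k S Γ) (c₁ c₂ : Config k S Γ) : Prop :=
  -- progress transition
  (c₁.1 = c₂.1 ∧ c₁.2.2 = c₂.2.2 ∧
    ∃ δ : ℝ, 0 < δ ∧ c₂.2.1 = shift c₁.2.1 δ ∧
      ∀ δ', 0 ≤ δ' → δ' ≤ δ → (A.Inv c₁.1).sat (shift c₁.2.1 δ')) ∨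
  -- reset transition
  ((A.Inv c₁.1).sat c₁.2.1 ∧ (A.Rc c₁.1 c₂.1).sat c₁.2.1 ∧
    c₂.2.1 = resetVal (A.Rr c₁.1 c₂.1) c₁.2.1 ∧ (A.Inv c₂.1).sat c₂.2.1 ∧
    ∃ w : List Γ, c₁.2.2 = A.PDa c₁.1 c₂.1 :: w ∧ c₂.2.2 = A.PDw c₁.1 c₂.1 ++ w)

/-- `→*_A`, the transitive closure of `→_A`. -/
def Reach {k : ℕ} {S Γ : Type} (A : PTA k S Γ) : Config k S Γ → Config k S Γ → Prop :=
  Relation.TransGen (Step A)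

/-- `(s₀,u₀,w₀) →*_{A,η} (s₁,u₁,w₁)`. -/
def ReachPat {k : ℕ} {S Γ : Type} (A : PTA k S Γ) (η : PatSeq k)
    (s₀ : S) (u₀ : DVal k) (w₀ : List Γ) (s₁ : S) (u₁ : DVal k) (w₁ : List Γ) : Prop :=
  ∃ v₀ v₁ : Val k, IsVal v₀ ∧ IsVal v₁ ∧ v₀ 0 = 0 ∧
    intPart v₀ = u₀ ∧ intPart v₁ = u₁ ∧ PatternOf v₀ v₁ η ∧
    Reach A (s₀, v₀, w₀) (s₁, v₁, w₁)

/-! ## The pattern graph -/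

/-- A configuration `(s, η, u, w)` of the pattern graph. -/
abbrev GConfig (k : ℕ) (S Γ : Type) := S × PatSeq k × DVal k × List Γ

/-- The one-step transition relation `→_G` of the pattern graph `G` of a PTA `A`,
through progress edges, stay edges and reset edges. -/
def GStep {k : ℕ} {S Γ : Type} (A : PTA k S Γ) (c₁ c₂ : GConfig k S Γ) : Prop :=
  -- progress edge
  (c₁.1 = c₂.1 ∧ c₁.2.2.2 = c₂.2.2.2 ∧
    nextPair c₁.2.1 c₁.2.2.1 = (c₂.2.1, c₂.2.2.1) ∧
    (A.Inv c₁.1).satP c₁.2.1 c₁.2.2.1 ∧ (A.Inv c₁.1).satP c₂.2.1 c₂.2.2.1) ∨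
  -- stay edge
  (c₁ = c₂ ∧ IsMergePat c₁.2.1 ∧ (A.Inv c₁.1).satP c₁.2.1 c₁.2.2.1) ∨
  -- reset edge
  (resetPair (A.Rr c₁.1 c₂.1) c₁.2.1 c₁.2.2.1 = (c₂.2.1, c₂.2.2.1) ∧
    ((A.Rc c₁.1 c₂.1).and (A.Inv c₁.1)).satP c₁.2.1 c₁.2.2.1 ∧
    (A.Inv c₂.1).satP c₂.2.1 c₂.2.2.1 ∧
    ∃ w : List Γ, c₁.2.2.2 = A.PDa c₁.1 c₂.1 :: w ∧ c₂.2.2.2 = A.PDw c₁.1 c₂.1 ++ w)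

/-- `→*_G`, the transitive closure of `→_G`. -/
def GReach {k : ℕ} {S Γ : Type} (A : PTA k S Γ) : GConfig k S Γ → GConfig k S Γ → Prop :=
  Relation.TransGen (GStep A)

end PTApaper
namespace PTApaper

/-!
A valuation is determined by the current instant and the instants of the last resets, and time
elapse only moves the current instant. Up to sign these instants are the coordinates `relCoord v`,
whose fractional parts are `fract(rel(v))`. Clock constraints compare differences of coordinates
with integers, so they are invariant under every increasing bijection of `ℝ` commuting with
`x ↦ x + 1`, that is, under lifts of orientation-preserving circle homeomorphisms; resets and time
elapse are carried to resets and time elapse. Equality of patterns and integral parts lets one such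
lift carry `(v₀¹, v₁)` to `(v₀², v₂)`, and it then carries runs to runs.
-/

open Set

/-! ### Interpolation by order automorphisms -/

theorem exists_orderIso_apply_eq_fixing_Iic {K : Type*} [Field K] [LinearOrder K]
    [IsStrictOrderedRing K] {c a b : K} (ha : c < a) (hb : c < b) :
    ∃ e : K ≃o K, (∀ x ≤ c, e x = x) ∧ e a = b := by
  set slope : K := (b - c) / (a - c) with hslope
  have slope_pos : 0 < slope := div_pos (sub_pos.mpr hb) (sub_pos.mpr ha)
  let stretch (t x : K) : K := if x ≤ c then x else c + t * (x - c)
  have stretch_strictMono : StrictMono (stretch slope) := by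
    intro x y hxy
    have hmul : slope * (x - c) < slope * (y - c) := by gcongr
    have hpos (hy : c < y) : 0 < slope * (y - c) := mul_pos slope_pos (sub_pos.mpr hy)
    grind
  have stretch_rightInverse : Function.RightInverse (stretch slope⁻¹) (stretch slope) := by
    intro y
    have hpos (hy : c < y) : 0 < slope⁻¹ * (y - c) :=
      mul_pos (inv_pos.mpr slope_pos) (sub_pos.mpr hy)
    have hcancel : slope * (slope⁻¹ * (y - c)) = y - c := mul_inv_cancel_left₀ slope_pos.ne' _
    grind
  refine ⟨stretch_strictMono.orderIsoOfRightInverse _ _ stretch_rightInverse,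
    fun x hx => if_pos hx, (if_neg ha.not_ge).trans ?_⟩
  rw [hslope, div_mul_cancel₀ _ (sub_pos.mpr ha).ne', add_sub_cancel]

theorem exists_orderIso_interpolating {K : Type*} [Field K] [LinearOrder K]
    [IsStrictOrderedRing K] (s : Finset (K × K))
    (hs : ∀ p ∈ s, ∀ q ∈ s, p.1 < q.1 ↔ p.2 < q.2) :
    ∃ e : K ≃o K, ∀ p ∈ s, e p.1 = p.2 := by
  induction s using Finset.induction_on_max_value (Prod.fst : K × K → K) with
  | empty => exact ⟨OrderIso.refl K, by simp⟩
  | insert a s _ hmax ih =>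
    simp only [Finset.forall_mem_insert] at hs ⊢
    obtain ⟨e, he⟩ := ih fun p hp => (hs.2 p hp).2
    by_cases htop : ∀ p ∈ s, p.1 < a.1
    -- Correct `e` at the new largest point by a stretching which fixes all values attained so far.
    · obtain ⟨c, hsc, hc⟩ := Order.exists_between_finsets (s.image Prod.snd) {e a.1, a.2} (by
        simp only [Finset.forall_mem_image, Finset.forall_mem_insert, Finset.mem_singleton,
          forall_eq]
        exact fun p hp =>
          ⟨he p hp ▸ e.strictMono (htop p hp), (hs.2 p hp).1.mp (htop p hp)⟩)
      simp only [Finset.forall_mem_image, Finset.forall_mem_insert, Finset.mem_singleton,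
        forall_eq] at hsc hc
      obtain ⟨g, hg, hga⟩ := exists_orderIso_apply_eq_fixing_Iic hc.1 hc.2
      exact ⟨e.trans g, hga, fun p hp => by
        rw [OrderIso.trans_apply, he p hp, hg _ (hsc hp).le]⟩
    · push Not at htop
      obtain ⟨p, hp, hap⟩ := htop
      have hfst : p.1 = a.1 := le_antisymm (hmax p hp) hap
      have hsnd : p.2 = a.2 := le_antisymm
        (not_lt.mp fun h => ((hs.1.2 p hp).mpr h).ne' hfst)
        (not_lt.mp fun h => ((hs.2 p hp).1.mpr h).ne hfst)
      exact ⟨e, by rw [← hfst, he p hp, hsnd], he⟩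

/-! ### Lifts of circle homeomorphisms -/

theorem apply_fract_mem_Ico {h : ℝ → ℝ} (hmono : StrictMono h) (h₀ : h 0 = 0) (h₁ : h 1 = 1)
    (x : ℝ) : h (Int.fract x) ∈ Ico 0 1 :=
  ⟨h₀ ▸ hmono.monotone (Int.fract_nonneg x), h₁ ▸ hmono (Int.fract_lt_one x)⟩

section PeriodicExtension

variable (h : ℝ ≃o ℝ) (h₀ : h 0 = 0) (h₁ : h 1 = 1)

/-- The lift of a circle homeomorphism which extends `h` from `[0, 1)` by commuting with integer
translations. -/
noncomputable def periodicExtension : CircleDeg1Lift where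
  toFun x := ⌊x⌋ + h (Int.fract x)
  monotone' x y hxy := by
    rcases (Int.floor_mono hxy).eq_or_lt with hfloor | hfloor
    · have hfract : Int.fract x ≤ Int.fract y := by
        rw [Int.fract, Int.fract, hfloor]
        exact sub_le_sub_right hxy _
      simpa only [hfloor, add_le_add_iff_left] using h.monotone hfract
    · have hfloor' : (⌊x⌋ : ℝ) + 1 ≤ ⌊y⌋ := by exact_mod_cast hfloor
      linarith [(apply_fract_mem_Ico h.strictMono h₀ h₁ x).2,
        (apply_fract_mem_Ico h.strictMono h₀ h₁ y).1]
  map_add_one' x := by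
    rw [Int.floor_add_one, Int.fract_add_one, Int.cast_add, Int.cast_one, add_right_comm]

theorem periodicExtension_apply (x : ℝ) :
    periodicExtension h h₀ h₁ x = ⌊x⌋ + h (Int.fract x) := rfl

theorem floor_periodicExtension (x : ℝ) : ⌊periodicExtension h h₀ h₁ x⌋ = ⌊x⌋ := by
  rw [periodicExtension_apply, Int.floor_intCast_add,
    Int.floor_eq_zero_iff.mpr (apply_fract_mem_Ico h.strictMono h₀ h₁ x), add_zero]

theorem fract_periodicExtension (x : ℝ) :
    Int.fract (periodicExtension h h₀ h₁ x) = h (Int.fract x) := by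
  rw [periodicExtension_apply, Int.fract_intCast_add,
    Int.fract_eq_self.mpr (apply_fract_mem_Ico h.strictMono h₀ h₁ x)]

theorem periodicExtension_symm_apply_apply (h₀' : h.symm 0 = 0) (h₁' : h.symm 1 = 1) (x : ℝ) :
    periodicExtension h.symm h₀' h₁' (periodicExtension h h₀ h₁ x) = x := by
  rw [periodicExtension_apply h.symm, floor_periodicExtension, fract_periodicExtension,
    h.symm_apply_apply, Int.floor_add_fract]

end PeriodicExtension

theorem exists_circleDeg1Lift_unit_eqOn_Ico (h : ℝ ≃o ℝ) (h₀ : h 0 = 0) (h₁ : h 1 = 1) :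
    ∃ f : CircleDeg1Liftˣ, EqOn f h (Ico 0 1) := by
  have h₀' : h.symm 0 = 0 := h.symm_apply_eq.mpr h₀.symm
  have h₁' : h.symm 1 = 1 := h.symm_apply_eq.mpr h₁.symm
  let f : CircleDeg1Liftˣ :=
    { val := periodicExtension h h₀ h₁
      inv := periodicExtension h.symm h₀' h₁'
      val_inv := CircleDeg1Lift.ext <|
        periodicExtension_symm_apply_apply h.symm h₀' h₁' h₀ h₁
      inv_val := CircleDeg1Lift.ext <| periodicExtension_symm_apply_apply h h₀ h₁ h₀' h₁' }
  refine ⟨f, fun x hx => (periodicExtension_apply h h₀ h₁ x).trans ?_⟩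
  rw [Int.floor_eq_zero_iff.mpr hx, Int.fract_eq_self.mpr hx, Int.cast_zero, zero_add]

theorem exists_circleDeg1Lift_unit_interpolating {ι : Type*} [Finite ι] {α β : ι → ℝ}
    (hα : ∀ i, α i ∈ Ico 0 1) (hβ : ∀ i, β i < 1) {i₀ : ι} (hα₀ : α i₀ = 0) (hβ₀ : β i₀ = 0)
    (hαβ : ∀ i j, α i < α j ↔ β i < β j) :
    ∃ f : CircleDeg1Liftˣ, ∀ i, f (α i) = β i := by
  have := Fintype.ofFinite ι
  obtain ⟨h, hh⟩ := exists_orderIso_interpolating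
    (insert ((1 : ℝ), (1 : ℝ)) (Finset.univ.image fun i => (α i, β i))) (by
      simp only [Finset.forall_mem_insert, Finset.forall_mem_image, Finset.mem_univ, lt_irrefl,
        true_and, forall_const, (hα _).2, (hα _).2.not_gt, hβ, (hβ _).not_gt, implies_true, hαβ])
  rw [Finset.forall_mem_insert, Finset.forall_mem_image] at hh
  have h_apply (i : ι) : h (α i) = β i := hh.2 (Finset.mem_univ i)
  have h₀ : h 0 = 0 := by simpa only [hα₀, hβ₀] using h_apply i₀
  obtain ⟨f, hf⟩ := exists_circleDeg1Lift_unit_eqOn_Ico h h₀ hh.1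
  exact ⟨f, fun i => (hf (hα i)).trans (h_apply i)⟩

theorem circleDeg1Lift_apply_eq_of_floor_eq (f : CircleDeg1Lift) {x y : ℝ} (hfloor : ⌊x⌋ = ⌊y⌋)
    (hfract : f (Int.fract x) = Int.fract y) : f x = y :=
  calc f x = ⌊x⌋ + f (Int.fract x) := by rw [← f.map_int_add, Int.floor_add_fract]
    _ = y := by rw [hfloor, hfract, Int.floor_add_fract]

theorem circleDeg1Lift_unit_strictMono (f : CircleDeg1Liftˣ) : StrictMono f :=
  (CircleDeg1Lift.toOrderIso f).strictMono

theorem evalR_map_sub_map_iff (f : CircleDeg1Liftˣ) (op : CCmp) (x y : ℝ) (d : ℕ) :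
    op.evalR (f x - f y) d ↔ op.evalR (x - y) d := by
  have hf := circleDeg1Lift_unit_strictMono f
  have hd : f (y + d) = f y + d := CircleDeg1Lift.map_add_nat f y d
  cases op <;> simp only [CCmp.evalR, ge_iff_le, gt_iff_lt]
  case lt => rw [sub_lt_iff_lt_add', sub_lt_iff_lt_add', ← hd, hf.lt_iff_lt]
  case le => rw [sub_le_iff_le_add', sub_le_iff_le_add', ← hd, hf.le_iff_le]
  case eq => rw [sub_eq_iff_eq_add', sub_eq_iff_eq_add', ← hd, hf.injective.eq_iff]
  case ge => rw [le_sub_iff_add_le', le_sub_iff_add_le', ← hd, hf.le_iff_le]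
  case gt => rw [lt_sub_iff_add_lt', lt_sub_iff_add_lt', ← hd, hf.lt_iff_lt]

/-! ### Relative coordinates -/

section RelCoord

variable {k : ℕ}

/-- The real-valued form of the relative representation: `relCoord v 0 = -v 0` and
`relCoord v i = v i - v 0` for `i ∈ K⁺`. It has the fractional parts of `rel(v)`, but unlike
`rel(v)` it does not keep the integral parts of `v`. -/
def relCoord (v : Val k) : Val k := fun i => if i = 0 then -v 0 else v i - v 0

@[simp]
theorem relCoord_zero (v : Val k) : relCoord v 0 = -v 0 := if_pos rfl

@[simp]
theorem relCoord_succ (v : Val k) (i : Fin k) : relCoord v i.succ = v i.succ - v 0 :=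
  if_neg i.succ_ne_zero

theorem relCoord_involutive : Function.Involutive (relCoord (k := k)) := by
  intro v
  funext i
  cases i using Fin.cases <;> simp

theorem relFract_eq_fract_relCoord (v : Val k) (i : Fin (k + 1)) :
    relFract v i = Int.fract (relCoord v i) := by
  have hzero : Int.fract (1 - Int.fract (v 0)) = Int.fract (-v 0) :=
    Int.fract_eq_fract.mpr ⟨1 + ⌊v 0⌋, by push_cast [Int.fract]; ring⟩
  cases i using Fin.cases with
  | zero => simpa [relFract] using hzero
  | succ i =>
    rw [relFract, if_neg i.succ_ne_zero, hzero, relCoord_succ, Int.fract_eq_fract]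
    exact ⟨-⌊v i.succ⌋ - ⌊-v 0⌋, by push_cast [Int.fract]; ring⟩

theorem relFract_mem_Ico (v : Val k) (i : Fin (k + 1)) : relFract v i ∈ Ico 0 1 := by
  rw [relFract_eq_fract_relCoord]
  exact ⟨Int.fract_nonneg _, Int.fract_lt_one _⟩

theorem Initial.relFract_zero {v : Val k} (hv : Initial v) : relFract v 0 = 0 := by
  rw [relFract_eq_fract_relCoord, relCoord_zero, hv, neg_zero, Int.fract_zero]

theorem floor_eq_of_intPart_eq {v w : Val k} (hv : IsVal v) (hw : IsVal w)
    (h : intPart v = intPart w) (i : Fin (k + 1)) : ⌊v i⌋ = ⌊w i⌋ := by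
  rw [← Int.toNat_of_nonneg (Int.floor_nonneg.mpr (hv i)),
    ← Int.toNat_of_nonneg (Int.floor_nonneg.mpr (hw i))]
  exact congrArg _ (congrFun h i)

theorem floor_sub_eq_ite {R : Type*} [CommRing R] [LinearOrder R] [IsStrictOrderedRing R]
    [FloorRing R] (x y : R) :
    ⌊x - y⌋ = ⌊x⌋ - ⌊y⌋ - if Int.fract x < Int.fract y then 1 else 0 := by
  rw [Int.floor_eq_iff]
  split_ifs <;> push_cast <;> constructor <;>
    linarith [Int.floor_add_fract x, Int.fract_nonneg x, Int.fract_lt_one x,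
      Int.floor_add_fract y, Int.fract_nonneg y, Int.fract_lt_one y]

theorem floor_relCoord_eq {v w : Val k} (hvw : ∀ i, ⌊v i⌋ = ⌊w i⌋)
    (hpos : 0 < relFract v 0 ↔ 0 < relFract w 0)
    (hlt : ∀ i, relFract v i < relFract v 0 ↔ relFract w i < relFract w 0) (i : Fin (k + 1)) :
    ⌊relCoord v i⌋ = ⌊relCoord w i⌋ := by
  simp only [relFract_eq_fract_relCoord] at hpos hlt
  have hzero : ⌊relCoord v 0⌋ = ⌊relCoord w 0⌋ := by
    have floor_apply_zero (u : Val k) :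
        ⌊u 0⌋ = -⌊relCoord u 0⌋ - if 0 < Int.fract (relCoord u 0) then 1 else 0 := by
      simpa using floor_sub_eq_ite 0 (relCoord u 0)
    have hv := floor_apply_zero v
    rw [hvw, floor_apply_zero w] at hv
    simp only [hpos] at hv
    lia
  cases i using Fin.cases with
  | zero => exact hzero
  | succ i =>
    have floor_apply_succ (u : Val k) : ⌊u i.succ⌋ = ⌊relCoord u i.succ⌋ - ⌊relCoord u 0⌋ -
        if Int.fract (relCoord u i.succ) < Int.fract (relCoord u 0) then 1 else 0 := by
      simpa using floor_sub_eq_ite (relCoord u i.succ) (relCoord u 0)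
    have hv := floor_apply_succ v
    rw [hvw, floor_apply_succ w] at hv
    simp only [hlt] at hv
    lia

theorem relFract_lt_iff_of_patternOf {va vb vc vd : Val k} {η : PatSeq k}
    (hab : PatternOf va vb η) (hcd : PatternOf vc vd η) (x y : Fin (k + 1) × Bool) :
    relFract (bval va vb x.2) x.1 < relFract (bval va vb y.2) y.1 ↔
      relFract (bval vc vd x.2) x.1 < relFract (bval vc vd y.2) y.1 := by
  obtain ⟨-, -, -, -, hcover⟩ := hab.1
  obtain ⟨p, hp, hxp⟩ := hcover x
  obtain ⟨q, hq, hyq⟩ := hcover y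
  obtain ⟨m, rfl⟩ := List.get_of_mem hp
  obtain ⟨n, rfl⟩ := List.get_of_mem hq
  exact (hab.2 m n _ _ _ _ hxp hyq).2.trans (hcd.2 m n _ _ _ _ hxp hyq).2.symm

end RelCoord

/-! ### Transport of valuations along a lift -/

section Transport

variable {k : ℕ}

/-- The valuation whose relative coordinates are the images under `f` of those of `v`; recall that
`relCoord` is its own inverse. -/
def transport (f : CircleDeg1Lift) (v : Val k) : Val k := relCoord (f ∘ relCoord v)

theorem transport_zero (f : CircleDeg1Lift) (v : Val k) : transport f v 0 = -f (-v 0) := by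
  simp [transport]

theorem transport_succ (f : CircleDeg1Lift) (v : Val k) (i : Fin k) :
    transport f v i.succ = f (v i.succ - v 0) - f (-v 0) := by
  simp [transport]

theorem transport_inv_transport (f : CircleDeg1Liftˣ) (v : Val k) :
    transport (f⁻¹ : CircleDeg1Liftˣ) (transport f v) = v := by
  have hcancel : (f⁻¹ : CircleDeg1Liftˣ) ∘ f = id :=
    funext (CircleDeg1Lift.units_inv_apply_apply f)
  rw [transport, transport, relCoord_involutive, ← Function.comp_assoc, hcancel, Function.id_comp,
    relCoord_involutive]

theorem sat_transport_iff (f : CircleDeg1Liftˣ) (v : Val k) (c : CC k) :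
    c.sat (transport f v) ↔ c.sat v := by
  induction c with
  | diff i j op d =>
    simpa only [CC.sat, transport_succ, sub_sub_sub_cancel_right]
      using evalR_map_sub_map_iff f op (v i.succ - v 0) (v j.succ - v 0) d
  | single i op d =>
    simpa only [CC.sat, transport_succ, sub_neg_eq_add, sub_add_cancel]
      using evalR_map_sub_map_iff f op (v i.succ - v 0) (-v 0) d
  | not c ih => exact not_congr ih
  | and c₁ c₂ ih₁ ih₂ => exact and_congr ih₁ ih₂

theorem transport_shift (f : CircleDeg1Lift) (v : Val k) (δ : ℝ) :
    transport f (shift v δ) = shift (transport f v) (f (-v 0) - f (-v 0 - δ)) := by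
  funext i
  cases i using Fin.cases with
  | zero => simp only [shift, transport_zero, neg_add']; ring
  | succ i => simp only [shift, transport_succ, add_sub_add_right_eq_sub, neg_add']; ring

theorem transport_resetVal (f : CircleDeg1Lift) (v : Val k) {r : Finset (Fin (k + 1))}
    (hr : 0 ∉ r) : transport f (resetVal r v) = resetVal r (transport f v) := by
  funext i
  cases i using Fin.cases with
  | zero => simp [resetVal, hr, transport_zero]
  | succ i => by_cases hi : i.succ ∈ r <;> simp [resetVal, hr, hi, transport_succ]

theorem transport_eq_of_relFract (f : CircleDeg1Lift) {v w : Val k} (hv : IsVal v) (hw : IsVal w)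
    (hint : intPart v = intPart w) (hf : ∀ i, f (relFract v i) = relFract w i)
    (hpos : 0 < relFract v 0 ↔ 0 < relFract w 0)
    (hlt : ∀ i, relFract v i < relFract v 0 ↔ relFract w i < relFract w 0) :
    transport f v = w := by
  have hfloor := floor_relCoord_eq (floor_eq_of_intPart_eq hv hw hint) hpos hlt
  simp only [relFract_eq_fract_relCoord] at hf
  have hcoord : f ∘ relCoord v = relCoord w :=
    funext fun i => circleDeg1Lift_apply_eq_of_floor_eq f (hfloor i) (hf i)
  rw [transport, hcoord, relCoord_involutive]

theorem PairEquiv.exists_transport_eq {va vb vc vd : Val k} (hva : IsVal va) (hvb : IsVal vb)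
    (hvc : IsVal vc) (hvd : IsVal vd) (h0a : Initial va) (h0c : Initial vc)
    (heq : PairEquiv va vb vc vd) :
    ∃ f : CircleDeg1Liftˣ, transport f va = vc ∧ transport f vb = vd := by
  obtain ⟨⟨η, hab, hcd⟩, hac, hbd⟩ := heq
  have hlt := relFract_lt_iff_of_patternOf hab hcd
  obtain ⟨f, hf⟩ := exists_circleDeg1Lift_unit_interpolating
    (α := fun x : Fin (k + 1) × Bool => relFract (bval va vb x.2) x.1)
    (β := fun x => relFract (bval vc vd x.2) x.1)
    (fun _ => relFract_mem_Ico _ _) (fun _ => (relFract_mem_Ico _ _).2)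
    (i₀ := (0, false)) h0a.relFract_zero h0c.relFract_zero hlt
  have hpos (b : Bool) : 0 < relFract (bval va vb b) 0 ↔ 0 < relFract (bval vc vd b) 0 := by
    simpa only [bval, h0a.relFract_zero, h0c.relFract_zero] using hlt (0, false) (0, b)
  exact ⟨f,
    transport_eq_of_relFract f hva hvc hac (fun i => hf (i, false)) (hpos false)
      fun i => hlt (i, false) (0, false),
    transport_eq_of_relFract f hvb hvd hbd (fun i => hf (i, true)) (hpos true)
      fun i => hlt (i, true) (0, true)⟩

end Transport

/-! ### Transport of runs -/

section Runs

variable {k : ℕ} {S Γ : Type}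

/-- The action of a lift on configurations, fixing the state and the stack. -/
def transportConfig (f : CircleDeg1Lift) (c : Config k S Γ) : Config k S Γ :=
  (c.1, transport f c.2.1, c.2.2)

theorem transportConfig_inv_transportConfig (f : CircleDeg1Liftˣ) (c : Config k S Γ) :
    transportConfig (f⁻¹ : CircleDeg1Liftˣ) (transportConfig f c) = c := by
  simp only [transportConfig, transport_inv_transport]

theorem sat_shift_transport_of_forall_le (f : CircleDeg1Liftˣ) {v : Val k} {c : CC k} {δ : ℝ}
    (hc : ∀ δ', 0 ≤ δ' → δ' ≤ δ → c.sat (shift v δ')) {ε : ℝ} (hε₀ : 0 ≤ ε)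
    (hε : ε ≤ f (-v 0) - f (-v 0 - δ)) : c.sat (shift (transport f v) ε) := by
  have hf := circleDeg1Lift_unit_strictMono f
  obtain ⟨x, hx⟩ := (CircleDeg1Lift.toOrderIso f).surjective (f (-v 0) - ε)
  rw [CircleDeg1Lift.coe_toOrderIso] at hx
  have hx_le : x ≤ -v 0 := hf.le_iff_le.mp (by linarith)
  have le_hx : -v 0 - δ ≤ x := hf.le_iff_le.mp (by linarith)
  have hsat := hc (-v 0 - x) (by linarith) (by linarith)
  rwa [← sat_transport_iff f, transport_shift, sub_sub_cancel, hx, sub_sub_cancel] at hsat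

theorem Step.transportConfig {A : PTA k S Γ} {c₁ c₂ : Config k S Γ} (f : CircleDeg1Liftˣ)
    (h : Step A c₁ c₂) : Step A (transportConfig f c₁) (transportConfig f c₂) := by
  rcases h with ⟨hstate, hstack, δ, hδ, hshift, hinv⟩ | ⟨hinv, hcond, hreset, hinv', hstack⟩
  · refine .inl ⟨hstate, hstack, f (-c₁.2.1 0) - f (-c₁.2.1 0 - δ), ?_, ?_, ?_⟩
    · exact sub_pos.mpr (circleDeg1Lift_unit_strictMono f (sub_lt_self _ hδ))
    · exact (congrArg (transport f) hshift).trans (transport_shift f _ δ)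
    · exact fun ε hε₀ hε => sat_shift_transport_of_forall_le f hinv hε₀ hε
  · exact .inr ⟨(sat_transport_iff f _ _).mpr hinv, (sat_transport_iff f _ _).mpr hcond,
      (congrArg (transport f) hreset).trans (transport_resetVal f _ (A.hRr _ _)),
      (sat_transport_iff f _ _).mpr hinv', hstack⟩

theorem Reach.transportConfig {A : PTA k S Γ} {c₁ c₂ : Config k S Γ} (f : CircleDeg1Liftˣ)
    (h : Reach A c₁ c₂) : Reach A (transportConfig f c₁) (transportConfig f c₂) :=
  Relation.TransGen.lift _ (fun _ _ => Step.transportConfig f) _ _ h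

theorem reach_transportConfig_iff {A : PTA k S Γ} {c₁ c₂ : Config k S Γ} (f : CircleDeg1Liftˣ) :
    Reach A (transportConfig f c₁) (transportConfig f c₂) ↔ Reach A c₁ c₂ :=
  ⟨fun h => by simpa only [transportConfig_inv_transportConfig] using h.transportConfig f⁻¹,
    Reach.transportConfig f⟩

end Runs

theorem strong_bisim_general {k : ℕ} {S Γ : Type} (A : PTA k S Γ) (s₀ s₁ : S)
    {va vb vc vd : Val k} (hva : IsVal va) (hvb : IsVal vb) (hvc : IsVal vc) (hvd : IsVal vd)
    (h0a : Initial va) (h0c : Initial vc) (w₀ w₁ : List Γ) (heq : PairEquiv va vb vc vd) :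
    Reach A (s₀, va, w₀) (s₁, vb, w₁) ↔ Reach A (s₀, vc, w₀) (s₁, vd, w₁) := by
  obtain ⟨f, rfl, rfl⟩ := heq.exists_transport_eq hva hvb hvc hvd h0a h0c
  exact (reach_transportConfig_iff f).symm

/-- Lemma `strongbisim`. Let `A` be a PTA. For any states `s₀, s₁`,
any two initial clock valuations `va, vc`, any two clock valuations `vb, vd`, and any two
stack words `w₀, w₁`: if `(va,vb) ≈ (vc,vd)`, then
`(s₀,va,w₀) →*_A (s₁,vb,w₁)` iff `(s₀,vc,w₀) →*_A (s₁,vd,w₁)`. -/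
theorem strong_bisim (k : ℕ) (hk : 1 ≤ k) {S Γ : Type} [Fintype S] [Fintype Γ]
    (A : PTA k S Γ) (s₀ s₁ : S)
    (va vb vc vd : Val k)
    (hva : IsVal va) (hvb : IsVal vb) (hvc : IsVal vc) (hvd : IsVal vd)
    (h0a : Initial va) (h0c : Initial vc)
    (w₀ w₁ : List Γ)
    (heq : PairEquiv va vb vc vd) :
    Reach A (s₀, va, w₀) (s₁, vb, w₁) ↔ Reach A (s₀, vc, w₀) (s₁, vd, w₁) := by
  exact strong_bisim_general A s₀ s₁ hva hvb hvc hvd h0a h0c w₀ w₁ heq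

end PTApaper
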